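/- arXiv:2206.00206 — 2 statements merged into one kernel-verified Lean document; each statement's English description precedes it below -/
import Mathlib

section
/- Let m ∈ ℕ and let φ: ℝ → ℝ satisfy ∫_ℝ φ(sin z / z) z^j dz = 0 for all j ∈ {1,…,m}, ∫_ℝ |φ(sin z / z)| |z|^{m+1} dz < ∞, A := ∫_ℝ φ(sin z / z) dz ≠ 0, and ∫_ℝ φ²(sin z / z) dz < ∞. Let p be a bounded density on ℝ^D of class C^{m+1} with all partial derivatives of order m+1 uniformly bounded. Then there exist constants C, C' > 0 (depending only on D, A, φ and p) such that for all R > 0 and all N ≥ 1, MISE(p_{N,R}^φ, p) := E ∫_{ℝ^D} (p_{N,R}^φ(k) − p(k))² dk ≤ C / R^{m+1} + C' R^D / N. -/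
/-!
Write `ψ z = φ (sin z / z)` and `K u = (R / A) ^ D ∏ j, ψ (R u_j)`, so that the estimator is the
empirical mean of `K (k - k_i)`. For fixed `k`, the expected squared error is the variance of this
mean plus the squared bias `b(k) ^ 2`, where `b(k) = ∫ K (k - y) p(y) dy - p(k)`
(`lintegral_sq_empirical_mean_sub_le`).

The variance is at most `N⁻¹ ∫ K (k - y) ^ 2 p(y) dy`. Integrated over `k` this gives
`N⁻¹ ‖K‖₂² = const · R ^ D / N`.

For the bias, Taylor's formula of order `m` (`abs_sub_taylor_le`) and the vanishing of the moments
of `ψ` of orders `1, …, m` (`integral_prod_mul_map_diag`) yield `|b(k)| ≤ B / R ^ (m + 1)` uniformly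
in `k` (`abs_bias_le`). On the other hand `∫ |b| ≤ ‖K‖₁ + 1`, which does not depend on `R`. Hence
`∫ b ^ 2 ≤ sup |b| · ∫ |b|` is `O(R ^ (-(m + 1)))`.

All interchanges of integrals are done for Lebesgue integrals of nonnegative functions
(`integral_integral_le_of_lintegral_swap`).
-/


open MeasureTheory Real Finset

/-- `sin z / z`, with the convention that its value at `z = 0` is `1`. -/
noncomputable def sincLike (z : ℝ) : ℝ := if z = 0 then 1 else Real.sin z / z

/-- The generalized Fourier density estimator
`p_{N,R}^φ(k) = (R^D / (N A^D)) Σ_i Π_j φ(sin(R(k_j − k_{ij})) / (R(k_j − k_{ij})))`,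
built from the sample `ks` of `N` points in `ℝ^D`; `A` is passed explicitly. -/
noncomputable def pEst (D N : ℕ) (φ : ℝ → ℝ) (A R : ℝ)
    (ks : Fin N → Fin D → ℝ) (k : Fin D → ℝ) : ℝ :=
  R ^ D / (N * A ^ D) *
    ∑ i : Fin N, ∏ j : Fin D, φ (sincLike (R * (k j - ks i j)))

/-- The law of an i.i.d. sample of size `N` from the distribution on `ℝ^D` with density `p`. -/
noncomputable def sampleMeasure (D N : ℕ) (p : (Fin D → ℝ) → ℝ) :
    Measure (Fin N → Fin D → ℝ) :=
  Measure.pi fun _ : Fin N => volume.withDensity fun x => ENNReal.ofReal (p x)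

/-- The mean integrated squared error of the generalized Fourier density estimator. -/
noncomputable def MISE (D N : ℕ) (φ : ℝ → ℝ) (A R : ℝ) (p : (Fin D → ℝ) → ℝ) : ℝ :=
  ∫ ks : Fin N → Fin D → ℝ,
    (∫ k : Fin D → ℝ, (pEst D N φ A R ks k - p k) ^ 2) ∂(sampleMeasure D N p)

/-! ### Taylor's formula in several variables -/

theorem iteratedDeriv_comp_line {E : Type*} [NormedAddCommGroup E] [NormedSpace ℝ E]
    {f : E → ℝ} {n : ℕ} (hf : ContDiff ℝ n f) (x v : E) (t : ℝ) :
    iteratedDeriv n (fun s : ℝ => f (x + s • v)) t =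
      iteratedFDeriv ℝ n f (x + t • v) (fun _ => v) := by
  have h1 : (fun s : ℝ => f (x + s • v)) =
      (fun y => f (x + y)) ∘ (ContinuousLinearMap.toSpanSingleton ℝ v) := by
    ext s; simp
  have h2 : ContDiff ℝ n (fun y => f (x + y)) := hf.comp (by fun_prop)
  rw [iteratedDeriv_eq_iteratedFDeriv, h1,
    ContinuousLinearMap.iteratedFDeriv_comp_right _ h2 _ le_rfl]
  simp [iteratedFDeriv_comp_add_left]

/-- Taylor's formula of order `m` in several variables, obtained from the one-variable formula for
`s ↦ f (x + s v)` on `[0, 1]`. The factor `1 / m!` in the remainder is bounded by `1`. -/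
theorem abs_sub_taylor_le {E : Type*} [NormedAddCommGroup E] [NormedSpace ℝ E]
    {f : E → ℝ} {m : ℕ} (hf : ContDiff ℝ (m + 1) f) {M : ℝ}
    (hM : ∀ x, ‖iteratedFDeriv ℝ (m + 1) f x‖ ≤ M) (x v : E) :
    |f (x + v) - ∑ j ∈ range (m + 1),
      (j.factorial : ℝ)⁻¹ * iteratedFDeriv ℝ j f x (fun _ => v)| ≤ M * ‖v‖ ^ (m + 1) := by
  have hM0 : 0 ≤ M := (norm_nonneg _).trans (hM x)
  have hg : ContDiff ℝ (m + 1) (fun s : ℝ => f (x + s • v)) := hf.comp (by fun_prop)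
  have hle : ∀ j : ℕ, j ≤ m + 1 → (j : WithTop ℕ∞) ≤ (m + 1 : WithTop ℕ∞) := by
    intro j hj; exact_mod_cast hj
  have key : ∀ j : ℕ, j ≤ m + 1 → ∀ t ∈ Set.Icc (0 : ℝ) 1,
      iteratedDerivWithin j (fun s : ℝ => f (x + s • v)) (Set.Icc 0 1) t =
        iteratedFDeriv ℝ j f (x + t • v) (fun _ => v) := by
    intro j hj t ht
    rw [iteratedDerivWithin_eq_iteratedDeriv (uniqueDiffOn_Icc zero_lt_one)
      ((hg.of_le (hle j hj)).contDiffAt) ht, iteratedDeriv_comp_line (hf.of_le (hle j hj))]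
  have h := taylor_mean_remainder_bound (f := fun s : ℝ => f (x + s • v)) (n := m)
    (C := M * ‖v‖ ^ (m + 1)) zero_le_one hg.contDiffOn (Set.right_mem_Icc.2 zero_le_one) (by
      intro y hy
      rw [key _ le_rfl y hy]
      refine (ContinuousMultilinearMap.le_opNorm _ _).trans ?_
      simp only [prod_const, card_univ, Fintype.card_fin]
      gcongr
      exact hM _)
  rw [taylor_within_apply] at h
  have hs : ∑ k ∈ range (m + 1), ((k.factorial : ℝ)⁻¹ * (1 - 0) ^ k) •
      iteratedDerivWithin k (fun s : ℝ => f (x + s • v)) (Set.Icc 0 1) 0 =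
      ∑ j ∈ range (m + 1),
        (j.factorial : ℝ)⁻¹ * iteratedFDeriv ℝ j f x (fun _ => v) := by
    refine sum_congr rfl fun j hj => ?_
    rw [key j (by simp at hj; omega) 0 (by simp)]
    simp
  rw [hs] at h
  simp only [one_smul, Real.norm_eq_abs, sub_zero, one_pow, mul_one] at h
  refine h.trans (div_le_self (by positivity) ?_)
  exact_mod_cast Nat.succ_le_of_lt (Nat.factorial_pos m)

/-! ### Moments of product kernels -/

/-- A `j`-linear form on the diagonal is a homogeneous polynomial: the monomial attached to
`f : Fin j → Fin D` has exponent `#(f ⁻¹ {i})` in the variable `w i`. -/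
theorem map_diag_eq_sum {D j : ℕ}
    (L : ContinuousMultilinearMap ℝ (fun _ : Fin j => (Fin D → ℝ)) ℝ) (w : Fin D → ℝ) :
    L (fun _ => w) = ∑ f : Fin j → Fin D,
      (∏ i : Fin D, w i ^ (#{l | f l = i})) * L (fun l => Pi.single (f l) 1) := by
  have hw : (fun _ : Fin j => w) =
      fun _ => ∑ i : Fin D, w i • (Pi.single i (1 : ℝ) : Fin D → ℝ) := by
    funext _; exact pi_eq_sum_univ' w
  rw [hw, ContinuousMultilinearMap.map_sum]
  refine sum_congr rfl fun f _ => ?_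
  rw [ContinuousMultilinearMap.map_smul_univ, smul_eq_mul]
  congr 1
  rw [← Finset.prod_fiberwise_of_maps_to' (s := univ) (t := univ) (g := f) (by simp)]
  simp

theorem integrable_mul_pow {ψ : ℝ → ℝ} (hψm : Measurable ψ) (hψ : Integrable ψ) {n : ℕ}
    (habs : Integrable fun z => |ψ z| * |z| ^ n) {j : ℕ} (hj : j ≤ n) :
    Integrable fun z => ψ z * z ^ j := by
  refine (hψ.norm.add habs).mono' (by fun_prop) (.of_forall fun z => ?_)
  simp only [norm_mul, norm_pow, Real.norm_eq_abs, Pi.add_apply]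
  have : |z| ^ j ≤ 1 + |z| ^ n := by
    rcases le_total |z| 1 with h | h
    · have := pow_le_one₀ (abs_nonneg z) h (n := j); have := pow_nonneg (abs_nonneg z) n; linarith
    · have := pow_le_pow_right₀ h hj; linarith
  nlinarith [abs_nonneg (ψ z)]

theorem integrable_prod_mul_map_diag {D j n : ℕ} {ψ : ℝ → ℝ} (hψm : Measurable ψ)
    (hψ : Integrable ψ) (habs : Integrable fun z => |ψ z| * |z| ^ n) (hj : j ≤ n)
    (L : ContinuousMultilinearMap ℝ (fun _ : Fin j => (Fin D → ℝ)) ℝ) :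
    Integrable fun w : Fin D → ℝ => (∏ i, ψ (w i)) * L (fun _ => w) := by
  simp_rw [map_diag_eq_sum L, mul_sum, ← mul_assoc, ← prod_mul_distrib]
  refine integrable_finsetSum _ fun f _ => Integrable.mul_const ?_ _
  refine Integrable.fintype_prod (f := fun i z => ψ z * z ^ (#{l | f l = i})) fun i => ?_
  exact integrable_mul_pow hψm hψ habs (((card_filter_le _ _).trans (by simp)).trans hj)

/-- Vanishing moments: every monomial of degree `j ≥ 1` contains some variable with an exponent
between `1` and `j`, and by Fubini the corresponding one-dimensional moment is a factor. -/
theorem integral_prod_mul_map_diag {D j n : ℕ} {ψ : ℝ → ℝ} (hψm : Measurable ψ)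
    (hψ : Integrable ψ) (habs : Integrable fun z => |ψ z| * |z| ^ n) (hj : j ≤ n)
    (hj1 : 1 ≤ j) (hmom : ∀ i, 1 ≤ i → i ≤ j → ∫ z, ψ z * z ^ i = 0)
    (L : ContinuousMultilinearMap ℝ (fun _ : Fin j => (Fin D → ℝ)) ℝ) :
    ∫ w : Fin D → ℝ, (∏ i, ψ (w i)) * L (fun _ => w) = 0 := by
  simp_rw [map_diag_eq_sum L, mul_sum, ← mul_assoc, ← prod_mul_distrib]
  rw [integral_finsetSum]
  · refine sum_eq_zero fun f _ => ?_
    rw [integral_mul_const,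
      integral_fintype_prod_volume_eq_prod (f := fun i z => ψ z * z ^ (#{l | f l = i}))]
    rw [prod_eq_zero (mem_univ (f ⟨0, hj1⟩)), zero_mul]
    refine hmom _ (card_pos.2 ⟨⟨0, hj1⟩, by simp⟩) ((card_filter_le _ _).trans (by simp))
  · intro f _
    refine Integrable.mul_const ?_ _
    refine Integrable.fintype_prod (f := fun i z => ψ z * z ^ (#{l | f l = i})) fun i => ?_
    exact integrable_mul_pow hψm hψ habs (((card_filter_le _ _).trans (by simp)).trans hj)

/-- The sup norm satisfies `‖w‖ ^ n ≤ ∑ i, |w i| ^ n`, which reduces the claim to products of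
one-dimensional integrals. -/
theorem integrable_prod_mul_norm_pow {D n : ℕ} {ψ : ℝ → ℝ} (hψm : Measurable ψ)
    (hψ : Integrable ψ) (habs : Integrable fun z => |ψ z| * |z| ^ n) (hn : n ≠ 0) :
    Integrable fun w : Fin D → ℝ => |∏ i, ψ (w i)| * ‖w‖ ^ n := by
  have h : Integrable fun w : Fin D → ℝ =>
      ∑ i : Fin D, ∏ l : Fin D, (|ψ (w l)| * if l = i then |w l| ^ n else 1) := by
    refine integrable_finsetSum _ fun i _ => ?_
    refine Integrable.fintype_prod
      (f := fun l z => |ψ z| * if l = i then |z| ^ n else 1) fun l => ?_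
    by_cases hl : l = i
    · simpa [hl] using habs
    · simpa [hl] using hψ.norm
  refine h.mono' (by fun_prop) (.of_forall fun w => ?_)
  simp_rw [prod_mul_distrib, ← mul_sum, prod_ite_eq' univ, abs_prod]
  rw [norm_mul, norm_pow, norm_norm, Real.norm_of_nonneg (by positivity)]
  gcongr
  simp only [mem_univ, if_true]
  rcases isEmpty_or_nonempty (Fin D) with hD | hD
  · simp [Subsingleton.elim w 0, hn]
  · obtain ⟨i, -, hi⟩ := exists_max_image univ (fun i => |w i|) univ_nonempty
    have hwi : ‖w‖ ≤ |w i| :=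
      (pi_norm_le_iff_of_nonneg (abs_nonneg _)).2 fun l => hi l (mem_univ l)
    exact (pow_le_pow_left₀ (norm_nonneg _) hwi n).trans
      (single_le_sum (f := fun i => |w i| ^ n) (fun i _ => by positivity) (mem_univ i))

/-! ### Bias -/

/-- The bias of the estimator is `O(R ^ (-(m + 1)))` uniformly in `k`. After the substitution
`w = R (k - y)`, the Taylor terms of order `1, …, m` of `w ↦ p (k - w / R)` integrate to zero
against the product kernel, and the remainder carries the factor `R ^ (-(m + 1))`. -/
theorem abs_bias_le {D m : ℕ} {ψ : ℝ → ℝ} (hψm : Measurable ψ) (hψ : Integrable ψ)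
    (hA : ∫ z, ψ z ≠ 0)
    (hmom : ∀ j : ℕ, 1 ≤ j → j ≤ m → ∫ z : ℝ, ψ z * z ^ j = 0)
    (habs : Integrable fun z => |ψ z| * |z| ^ (m + 1))
    {p : (Fin D → ℝ) → ℝ} (hp_meas : Measurable p) (hp_nonneg : ∀ x, 0 ≤ p x)
    {Mp : ℝ} (hp_bdd : ∀ x, p x ≤ Mp) (hp_smooth : ContDiff ℝ (m + 1) p)
    {Md : ℝ} (hp_deriv : ∀ x, ‖iteratedFDeriv ℝ (m + 1) p x‖ ≤ Md)
    {R : ℝ} (hR : 0 < R) (k : Fin D → ℝ) :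
    |(∫ y, R ^ D / (∫ z, ψ z) ^ D * (∏ j, ψ (R * (k j - y j))) * p y) - p k| ≤
      |((∫ z, ψ z) ^ D)⁻¹| * (Md * ∫ w : Fin D → ℝ, |∏ i, ψ (w i)| * ‖w‖ ^ (m + 1)) /
        R ^ (m + 1) := by
  set A := ∫ z, ψ z with hAdef
  have hAD : A ^ D ≠ 0 := pow_ne_zero _ hA
  have hMd : 0 ≤ Md := (norm_nonneg _).trans (hp_deriv k)
  have hprod : ∫ w : Fin D → ℝ, ∏ i, ψ (w i) = A ^ D := by
    rw [integral_fintype_prod_volume_eq_pow]; simp [hAdef]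
  have hΦ : Integrable fun w : Fin D → ℝ => ∏ i, ψ (w i) :=
    Integrable.fintype_prod (f := fun _ => ψ) fun _ => hψ
  -- substitution `w = R (k - y)`
  have hcov : ∫ y, R ^ D / A ^ D * (∏ j, ψ (R * (k j - y j))) * p y =
      (A ^ D)⁻¹ * ∫ w : Fin D → ℝ, (∏ i, ψ (w i)) * p (k + -(R⁻¹ • w)) := by
    rw [← integral_sub_left_eq_self _ volume k]
    have h := Measure.integral_comp_smul (volume : Measure (Fin D → ℝ))
      (fun w => R ^ D / A ^ D * (∏ j, ψ (w j)) * p (k + -(R⁻¹ • w))) R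
    have e : ∀ u : Fin D → ℝ, k + -(R⁻¹ • R • u) = k - u := by
      intro u; rw [inv_smul_smul₀ hR.ne', sub_eq_add_neg]
    simp only [e, Pi.smul_apply, smul_eq_mul] at h
    simp only [Pi.sub_apply, sub_sub_cancel]
    rw [h]
    simp only [mul_assoc]
    rw [integral_const_mul, Module.finrank_fin_fun, abs_of_pos (by positivity)]
    field_simp
  -- the Taylor polynomial of order `m` of `w ↦ p (k - w / R)` at `0`
  set T : (Fin D → ℝ) → ℝ := fun w => ∑ j ∈ range (m + 1),
      (j.factorial : ℝ)⁻¹ * iteratedFDeriv ℝ j p k (fun _ => -(R⁻¹ • w)) with hT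
  have hTeq : ∀ w, (∏ i, ψ (w i)) * T w = ∑ j ∈ range (m + 1),
      ((j.factorial : ℝ)⁻¹ * (-R⁻¹) ^ j) *
        ((∏ i, ψ (w i)) * iteratedFDeriv ℝ j p k (fun _ => w)) := by
    intro w
    rw [hT, mul_sum]
    refine sum_congr rfl fun j _ => ?_
    have : (fun _ : Fin j => -(R⁻¹ • w)) = fun _ => (-R⁻¹) • w := by
      funext _; rw [neg_smul]
    rw [this, ContinuousMultilinearMap.map_smul_univ]
    simp only [prod_const, card_univ, Fintype.card_fin, smul_eq_mul]
    ring
  have hint : ∀ j ∈ range (m + 1), Integrable fun w : Fin D → ℝ =>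
      ((j.factorial : ℝ)⁻¹ * (-R⁻¹) ^ j) *
        ((∏ i, ψ (w i)) * iteratedFDeriv ℝ j p k (fun _ => w)) := by
    intro j hj
    have hj' : j ≤ m + 1 := by simp at hj; omega
    exact (integrable_prod_mul_map_diag hψm hψ habs hj' _).const_mul _
  have hΦT : Integrable fun w : Fin D → ℝ => (∏ i, ψ (w i)) * T w := by
    simp_rw [hTeq]
    exact integrable_finsetSum _ hint
  have hΦTint : ∫ w : Fin D → ℝ, (∏ i, ψ (w i)) * T w = A ^ D * p k := by
    simp_rw [hTeq]
    -- only the term of order `0` survives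
    rw [integral_finsetSum _ hint, sum_range_succ', sum_eq_zero, zero_add]
    · simp [integral_mul_const, hprod]
    · intro j hj
      have hj' : j + 1 ≤ m := by simp at hj; omega
      rw [integral_const_mul, integral_prod_mul_map_diag hψm hψ habs (by omega) (by omega)
        (fun i h1 h2 => hmom i h1 (h2.trans hj')), mul_zero]
  have hΦp : Integrable fun w : Fin D → ℝ => (∏ i, ψ (w i)) * p (k + -(R⁻¹ • w)) := by
    refine (hΦ.norm.mul_const Mp).mono' (by fun_prop) (.of_forall fun w => ?_)
    rw [norm_mul, Real.norm_of_nonneg (hp_nonneg _)]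
    gcongr
    exact hp_bdd _
  have hdiff : (A ^ D)⁻¹ * (∫ w : Fin D → ℝ, (∏ i, ψ (w i)) * p (k + -(R⁻¹ • w))) - p k =
      (A ^ D)⁻¹ * ∫ w : Fin D → ℝ, (∏ i, ψ (w i)) * (p (k + -(R⁻¹ • w)) - T w) := by
    simp_rw [mul_sub]
    rw [integral_sub hΦp hΦT, hΦTint]
    field_simp
  rw [hcov, hdiff, abs_mul, mul_div_assoc]
  refine mul_le_mul_of_nonneg_left ?_ (abs_nonneg _)
  have hI := (integrable_prod_mul_norm_pow (D := D) hψm hψ habs (by omega)).const_mul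
    (Md / R ^ (m + 1))
  change ‖∫ w : Fin D → ℝ, (∏ i, ψ (w i)) * (p (k + -(R⁻¹ • w)) - T w)‖ ≤ _
  refine (norm_integral_le_of_norm_le hI (.of_forall fun w => ?_)).trans_eq ?_
  · rw [norm_mul, Real.norm_eq_abs, Real.norm_eq_abs]
    have h := abs_sub_taylor_le hp_smooth hp_deriv k (-(R⁻¹ • w))
    rw [norm_neg, norm_smul, norm_inv, Real.norm_of_nonneg hR.le, mul_pow] at h
    calc _ ≤ |∏ i, ψ (w i)| * (Md * (R⁻¹ ^ (m + 1) * ‖w‖ ^ (m + 1))) := by gcongr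
      _ = _ := by rw [inv_pow]; ring
  · rw [integral_const_mul]; ring

/-! ### Variance -/

/-- Bias–variance decomposition for an empirical mean of `N` i.i.d. terms, the variance being bounded
by the second moment. No moment assumption is needed: the right-hand side may be infinite. -/
theorem lintegral_sq_empirical_mean_sub_le {α : Type*} [MeasurableSpace α] (μ : Measure α)
    [IsProbabilityMeasure μ] {g : α → ℝ} (hg : Measurable g) {N : ℕ} (hN : 1 ≤ N) (c : ℝ) :
    ∫⁻ ks : Fin N → α, ENNReal.ofReal (((N : ℝ)⁻¹ * ∑ i, g (ks i) - c) ^ 2)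
        ∂(Measure.pi fun _ => μ) ≤
      ENNReal.ofReal (N : ℝ)⁻¹ * ∫⁻ y, ENNReal.ofReal (g y ^ 2) ∂μ +
        ENNReal.ofReal ((∫ y, g y ∂μ - c) ^ 2) := by
  have hN' : (0 : ℝ) < N := by exact_mod_cast hN
  by_cases hL : MemLp g 2 μ
  swap
  · -- without a second moment the right-hand side is infinite
    have : ∫⁻ y, ENNReal.ofReal (g y ^ 2) ∂μ = ⊤ := by
      by_contra h
      refine hL ((memLp_two_iff_integrable_sq hg.aestronglyMeasurable).2
        ⟨by fun_prop, ?_⟩)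
      rw [hasFiniteIntegral_iff_ofReal (.of_forall fun _ => sq_nonneg _)]
      exact lt_top_iff_ne_top.2 h
    rw [this, ENNReal.mul_top (by simpa using Nat.one_le_iff_ne_zero.1 hN)]
    simp
  have hgi : ∀ i : Fin N, MemLp (fun ks : Fin N → α => g (ks i)) 2 (Measure.pi fun _ => μ) :=
    fun i => hL.comp_measurePreserving (measurePreserving_eval (fun _ : Fin N => μ) i)
  have hS : MemLp (fun ks : Fin N → α => ∑ i, g (ks i)) 2 (Measure.pi fun _ => μ) :=
    memLp_finsetSum _ fun i _ => hgi i
  have hX : MemLp (fun ks : Fin N → α => (N : ℝ)⁻¹ * ∑ i, g (ks i)) 2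
      (Measure.pi fun _ => μ) := hS.const_mul _
  have hXc : MemLp (fun ks : Fin N → α => (N : ℝ)⁻¹ * ∑ i, g (ks i) - c) 2
      (Measure.pi fun _ => μ) := hX.sub (memLp_const c)
  have hmean : ∫ ks : Fin N → α, ((N : ℝ)⁻¹ * ∑ i, g (ks i) - c) ∂(Measure.pi fun _ => μ) =
      ∫ y, g y ∂μ - c := by
    rw [integral_sub (hX.integrable one_le_two) (integrable_const _), integral_const_mul,
      integral_finsetSum _ fun i _ => (hgi i).integrable one_le_two]
    simp_rw [integral_comp_eval (μ := fun _ : Fin N => μ) hg.aestronglyMeasurable]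
    simp [inv_mul_cancel_left₀ hN'.ne']
  have hvar : ProbabilityTheory.variance
      (fun ks : Fin N → α => (N : ℝ)⁻¹ * ∑ i, g (ks i) - c) (Measure.pi fun _ => μ) =
      (N : ℝ)⁻¹ * ProbabilityTheory.variance g μ := by
    rw [ProbabilityTheory.variance_sub_const hX.aestronglyMeasurable,
      ProbabilityTheory.variance_const_mul]
    have h := ProbabilityTheory.variance_sum_pi (μ := fun _ : Fin N => μ) (X := fun _ => g)
      fun _ => hL
    have e : (∑ i : Fin N, fun ω : Fin N → α => g (ω i)) = fun ks => ∑ i, g (ks i) := by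
      ext; simp
    rw [e] at h
    rw [h]
    simp
    field_simp
  have hsq := ProbabilityTheory.variance_eq_sub hXc
  rw [hvar, hmean] at hsq
  simp only [Pi.pow_apply] at hsq
  have hle := ProbabilityTheory.variance_le_expectation_sq (μ := μ) hg.aestronglyMeasurable
  simp only [Pi.pow_apply] at hle
  rw [← ofReal_integral_eq_lintegral_ofReal hXc.integrable_sq
      (.of_forall fun _ => sq_nonneg _),
    ← ofReal_integral_eq_lintegral_ofReal hL.integrable_sq (.of_forall fun _ => sq_nonneg _),
    ← ENNReal.ofReal_mul (by positivity), ← ENNReal.ofReal_add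
      (mul_nonneg (by positivity) (integral_nonneg fun _ => sq_nonneg _)) (sq_nonneg _)]
  refine ENNReal.ofReal_le_ofReal ?_
  have := mul_le_mul_of_nonneg_left hle (inv_nonneg.2 hN'.le)
  linarith

/-! ### Interchange of integrals and norms of the kernel -/

/-- Tonelli in the form used for the mean integrated squared error: a bound on the swapped Lebesgue
integrals bounds the iterated Bochner integral, with no integrability hypothesis on `F`. -/
theorem integral_integral_le_of_lintegral_swap {α β : Type*} [MeasurableSpace α]
    [MeasurableSpace β] {μ : Measure α} {ν : Measure β} [SFinite μ] [SFinite ν]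
    {F : α → β → ℝ} (hF : Measurable (Function.uncurry F)) (hF0 : ∀ x y, 0 ≤ F x y)
    {V : ℝ} (hV : 0 ≤ V) (h : ∫⁻ y, ∫⁻ x, ENNReal.ofReal (F x y) ∂μ ∂ν ≤ ENNReal.ofReal V) :
    ∫ x, ∫ y, F x y ∂ν ∂μ ≤ V := by
  rw [integral_eq_lintegral_of_nonneg_ae (.of_forall fun x => integral_nonneg (hF0 x))
    (hF.stronglyMeasurable.integral_prod_right (ν := ν)).aestronglyMeasurable]
  refine ENNReal.toReal_le_of_le_ofReal hV (le_trans ?_ h)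
  rw [lintegral_lintegral_swap (by fun_prop)]
  refine lintegral_mono fun x => ?_
  rw [integral_eq_lintegral_of_nonneg_ae (.of_forall (hF0 x)) (by fun_prop)]
  exact ENNReal.ofReal_toReal_le

/-- Convolution with a probability measure preserves the total Lebesgue integral. -/
theorem lintegral_lintegral_sub {D : ℕ} (μ : Measure (Fin D → ℝ)) [IsProbabilityMeasure μ]
    {G : (Fin D → ℝ) → ENNReal} (hG : Measurable G) :
    ∫⁻ k, ∫⁻ y, G (k - y) ∂μ = ∫⁻ u, G u := by
  rw [lintegral_lintegral_swap (by fun_prop)]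
  simp_rw [lintegral_sub_right_eq_self G]
  simp

theorem lintegral_ofReal_mul_prod {D : ℕ} {χ : ℝ → ℝ} (hχ : Integrable χ) (hχ0 : ∀ z, 0 ≤ χ z)
    {c R : ℝ} (hc : 0 ≤ c) (hR : 0 < R) :
    ∫⁻ u : Fin D → ℝ, ENNReal.ofReal (c * ∏ j, χ (R * u j)) =
      ENNReal.ofReal (c * ((R ^ D)⁻¹ * (∫ z, χ z) ^ D)) := by
  have hi : Integrable fun u : Fin D → ℝ => c * ∏ j, χ (R * u j) :=
    (Integrable.fintype_prod (f := fun _ z => χ (R * z))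
      fun _ => hχ.comp_mul_left' hR.ne').const_mul _
  rw [← ofReal_integral_eq_lintegral_ofReal hi
    (.of_forall fun u => mul_nonneg hc (prod_nonneg fun _ _ => hχ0 _)), integral_const_mul,
    integral_fintype_prod_volume_eq_pow (fun z => χ (R * z)), Measure.integral_comp_mul_left,
    abs_of_pos (by positivity), smul_eq_mul, mul_pow, Fintype.card_fin, inv_pow]

theorem measurable_sincLike : Measurable sincLike :=
  Measurable.ite (measurableSet_singleton 0) measurable_const
    (Real.measurable_sin.div measurable_id)

/-! ### The bound on the mean integrated squared error -/

/-- Theorem 1 in the paper: MISE bound for the generalized Fourier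
density estimator. -/
theorem mise_bound_generalized_fourier
    (D m : ℕ) (hD : 0 < D)
    (φ : ℝ → ℝ) (hφ_meas : Measurable φ)
    (A : ℝ) (hA_int : Integrable (fun z : ℝ => φ (sincLike z)))
    (hA_def : A = ∫ z : ℝ, φ (sincLike z)) (hA_ne : A ≠ 0)
    (hmom : ∀ j : ℕ, 1 ≤ j → j ≤ m → ∫ z : ℝ, φ (sincLike z) * z ^ j = 0)
    (habs : Integrable (fun z : ℝ => |φ (sincLike z)| * |z| ^ (m + 1)))
    (hφ2 : Integrable (fun z : ℝ => φ (sincLike z) ^ 2))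
    (p : (Fin D → ℝ) → ℝ)
    (hp_meas : Measurable p) (hp_nonneg : ∀ x, 0 ≤ p x)
    (hp_int : Integrable p) (hp_one : ∫ x : Fin D → ℝ, p x = 1)
    (Mp : ℝ) (hp_bdd : ∀ x, p x ≤ Mp)
    (hp_smooth : ContDiff ℝ (m + 1) p)
    (Md : ℝ) (hp_deriv : ∀ x, ‖iteratedFDeriv ℝ (m + 1) p x‖ ≤ Md) :
    ∃ C C' : ℝ, 0 < C ∧ 0 < C' ∧
      ∀ R : ℝ, 0 < R → ∀ N : ℕ, 1 ≤ N →
        MISE D N φ A R p ≤ C / R ^ (m + 1) + C' * R ^ D / N := by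
  set ψ : ℝ → ℝ := fun z => φ (sincLike z) with hψdef
  have hψm : Measurable ψ := hφ_meas.comp measurable_sincLike
  -- `B` bounds the rescaled bias, `W` is the `L¹` norm of the normalized kernel and `Q` its
  -- squared `L²` norm, both at `R = 1`.
  set B : ℝ := |(A ^ D)⁻¹| *
    (Md * ∫ w : Fin D → ℝ, |∏ i, ψ (w i)| * ‖w‖ ^ (m + 1)) with hB
  set W : ℝ := |(A ^ D)⁻¹| * (∫ z, |ψ z|) ^ D with hW
  set Q : ℝ := ((A ^ D)⁻¹) ^ 2 * (∫ z, ψ z ^ 2) ^ D with hQ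
  have hMd : 0 ≤ Md := (norm_nonneg _).trans (hp_deriv 0)
  have hB0 : 0 ≤ B :=
    mul_nonneg (abs_nonneg _) (mul_nonneg hMd (integral_nonneg fun w => by positivity))
  have hW0 : 0 ≤ W :=
    mul_nonneg (abs_nonneg _) (pow_nonneg (integral_nonneg fun w => abs_nonneg _) _)
  have hQ0 : 0 ≤ Q :=
    mul_nonneg (sq_nonneg _) (pow_nonneg (integral_nonneg fun w => sq_nonneg _) _)
  -- The summands `+ 1` only ensure strict positivity.
  refine ⟨B * (W + 1) + 1, Q + 1, by positivity, by positivity, fun R hR N hN => ?_⟩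
  have hN' : (0 : ℝ) < N := by exact_mod_cast hN
  set μ : Measure (Fin D → ℝ) := volume.withDensity fun x => ENNReal.ofReal (p x) with hμ
  have hplint : ∫⁻ x, ENNReal.ofReal (p x) = 1 := by
    rw [← ofReal_integral_eq_lintegral_ofReal hp_int (.of_forall hp_nonneg), hp_one,
      ENNReal.ofReal_one]
  have : IsProbabilityMeasure μ :=
    ⟨by rw [hμ, withDensity_apply _ MeasurableSet.univ, Measure.restrict_univ, hplint]⟩
  -- the normalized kernel, of which the estimator is the empirical mean
  set K : (Fin D → ℝ) → ℝ := fun u => R ^ D / A ^ D * ∏ j, ψ (R * u j) with hK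
  have hKm : Measurable K := by fun_prop
  have hest : ∀ ks k, pEst D N φ A R ks k = (N : ℝ)⁻¹ * ∑ i, K (k - ks i) := by
    intro ks k
    simp only [pEst, hK, Pi.sub_apply, ← mul_sum, ← mul_assoc, hψdef]
    congr 1
    field_simp
  have hbias : ∀ k, |∫ y, K (k - y) ∂μ - p k| ≤ B / R ^ (m + 1) := by
    intro k
    have h := abs_bias_le hψm hA_int (hA_def ▸ hA_ne) hmom habs hp_meas hp_nonneg hp_bdd
      hp_smooth hp_deriv hR k
    rw [← hA_def] at h
    rw [hμ, integral_withDensity_eq_integral_toReal_smul (by fun_prop) (by simp)]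
    simp only [ENNReal.toReal_ofReal (hp_nonneg _), smul_eq_mul]
    simpa only [hK, Pi.sub_apply, mul_comm (p _)] using h
  have hK1 : ∫⁻ u, ENNReal.ofReal |K u| = ENNReal.ofReal W := by
    have h := lintegral_ofReal_mul_prod (D := D) hA_int.abs (fun z => abs_nonneg _)
      (abs_nonneg (R ^ D / A ^ D)) hR
    simp only [hK, abs_mul, abs_prod]
    refine h.trans ?_
    congr 1
    rw [hW, abs_div, abs_inv, abs_of_pos (pow_pos hR D)]
    field_simp
  have hK2 : ∫⁻ u, ENNReal.ofReal (K u ^ 2) = ENNReal.ofReal (Q * R ^ D) := by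
    have h := lintegral_ofReal_mul_prod (D := D) (χ := fun z => ψ z ^ 2) hφ2 (fun z => sq_nonneg _)
      (sq_nonneg (R ^ D / A ^ D)) hR
    simp only [hK, mul_pow, ← prod_pow]
    refine h.trans ?_
    congr 1
    rw [hQ]
    field_simp
  -- The squared bias is at most its uniform bound times its absolute value; the latter is
  -- integrable in `k`, which the uniform bound alone would not give.
  have hpt : ∀ k, ∫⁻ ks : Fin N → Fin D → ℝ,
      ENNReal.ofReal ((pEst D N φ A R ks k - p k) ^ 2) ∂(sampleMeasure D N p) ≤
      ENNReal.ofReal (N : ℝ)⁻¹ * ∫⁻ y, ENNReal.ofReal (K (k - y) ^ 2) ∂μ +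
        ENNReal.ofReal (B / R ^ (m + 1)) *
          (∫⁻ y, ENNReal.ofReal |K (k - y)| ∂μ + ENNReal.ofReal (p k)) := by
    intro k
    simp only [hest]
    refine (lintegral_sq_empirical_mean_sub_le μ (g := fun y => K (k - y))
      (by fun_prop) hN (p k)).trans ?_
    gcongr
    rw [← sq_abs, sq, ENNReal.ofReal_mul (abs_nonneg _)]
    gcongr
    · exact hbias k
    · rw [← Real.enorm_eq_ofReal_abs, ← Real.enorm_eq_ofReal (hp_nonneg k)]
      simp_rw [← Real.enorm_eq_ofReal_abs]
      exact (enorm_sub_le).trans (add_le_add_left (enorm_integral_le_lintegral_enorm _) _)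
  have hV : 0 ≤ (N : ℝ)⁻¹ * (Q * R ^ D) + B / R ^ (m + 1) * (W + 1) := by positivity
  have hmain : MISE D N φ A R p ≤
      (N : ℝ)⁻¹ * (Q * R ^ D) + B / R ^ (m + 1) * (W + 1) := by
    have : IsProbabilityMeasure (sampleMeasure D N p) := by
      unfold sampleMeasure; infer_instance
    refine integral_integral_le_of_lintegral_swap ?_ (fun _ _ => sq_nonneg _) hV ?_
    · simp only [hest, Function.uncurry_def]
      fun_prop
    refine (lintegral_mono hpt).trans_eq ?_
    rw [lintegral_add_left (by fun_prop), lintegral_const_mul _ (by fun_prop),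
      lintegral_const_mul _ (by fun_prop), lintegral_add_right _ (by fun_prop), hplint,
      lintegral_lintegral_sub μ (G := fun u => ENNReal.ofReal (K u ^ 2)) (by fun_prop),
      lintegral_lintegral_sub μ (G := fun u => ENNReal.ofReal |K u|) (by fun_prop), hK1, hK2,
      ENNReal.ofReal_add (by positivity) (by positivity),
      ENNReal.ofReal_mul (p := (N : ℝ)⁻¹) (by positivity),
      ENNReal.ofReal_mul (p := B / R ^ (m + 1)) (by positivity),
      ENNReal.ofReal_add hW0 zero_le_one, ENNReal.ofReal_one]
  refine hmain.trans ?_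
  have e1 : B / R ^ (m + 1) * (W + 1) ≤ (B * (W + 1) + 1) / R ^ (m + 1) := by
    rw [div_mul_eq_mul_div]; gcongr; linarith
  have e2 : (N : ℝ)⁻¹ * (Q * R ^ D) ≤ (Q + 1) * R ^ D / N := by
    rw [inv_mul_eq_div]; gcongr; linarith
  linarith
end

section
/- Let φ(z) = z, so that p_{N,R}^φ is the classical Fourier integral density estimator. Suppose the true density p ∈ L¹(ℝ^D) ∩ L²(ℝ^D) is supersmooth of order α > 0, i.e. its Fourier transform satisfies |p̂(x)| ≤ C₁ exp(−C₂ Σ_{j=1}^D |x_j|^α) almost everywhere for some constants C₁, C₂ > 0. Then there exist universal constants C̄₁, C̄₂, C̄₃ such that for all R ≥ C̄₁ and all N ≥ 1, MISE(p_{N,R}^φ, p) ≤ C̄₂ ( R^{max{1−α, 0}} exp(−C̄₃ R^α) + R^D / N ). -/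
/-!
The estimator is the average of the translates `K(k - kᵢ)` of the product kernel
`K(u) = ∏ⱼ (R/π) sinc(R uⱼ)`, whose Fourier transform is the indicator of the cube `[-R, R]^D`.
Hence `K` is idempotent for convolution (`integral_kerD_mul`), and expanding the square gives the
exact risk (`MISE_eq`)

  `MISE = (K(0) - S) / N + (∫ p² - S)`,  where `S = ∬ K(x - y) p(x) p(y) dx dy`.

By Fubini, `S = (2π)^{-D} ∫_{[-R,R]^D} |p̂|² ≥ 0` (`integral_kerD_density`), and by Plancherel
`∫ p² = (2π)^{-D} ∫ |p̂|²` (`integral_sq_eq`). So the first term is at most `K(0)/N = (R/π)^D / N`,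
and the second is the energy of `p̂` outside the cube. There `∑ |tⱼ|^α ≥ R^α`, so the supersmooth
bound gives at most a constant times `exp(-C₂ R^α)` (`tail_bound`); for `R ≥ 1` the factor
`R^{max(1-α,0)}` is at least `1`.

Plancherel is needed for the Fourier integral of functions in `L¹ ∩ L²`; it follows from the `L²`
isometry once the two transforms are identified (`fourier_toLp_ae_eq`).
-/

open MeasureTheory Real Finset

/-- The Fourier transform `p̂(t) = ∫ e^{i t·x} p(x) dx` of the density `p` on `ℝ^D`. -/
noncomputable def charFun (D : ℕ) (p : (Fin D → ℝ) → ℝ) (t : Fin D → ℝ) : ℂ :=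
  ∫ x : Fin D → ℝ, Complex.exp (Complex.I * ((∑ j : Fin D, t j * x j : ℝ) : ℂ)) * (p x : ℂ)

/-! ### Plancherel's identity for integrable square-integrable functions -/

section Plancherel

open FourierTransform SchwartzMap
open scoped ContDiff

variable {E : Type*} [NormedAddCommGroup E] [InnerProductSpace ℝ E] [FiniteDimensional ℝ E]
  [MeasurableSpace E] [BorelSpace E]

/-- On `L¹ ∩ L²` the `L²` Fourier transform is given by the Fourier integral: both represent the
same tempered distribution. -/
lemma fourier_toLp_ae_eq {f : E → ℂ} (hf1 : Integrable f) (hf2 : MemLp f 2) :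
    (𝓕 (hf2.toLp f) : Lp (α := E) ℂ 2) =ᵐ[volume] 𝓕 f := by
  have hcont : Continuous (𝓕 f) := by
    exact VectorFourier.fourierIntegral_continuous Real.continuous_fourierChar
      (by exact continuous_inner) hf1
  refine ae_eq_of_integral_contDiff_smul_eq
    ((Lp.memLp _).locallyIntegrable one_le_two) hcont.locallyIntegrable ?_
  intro g g_smooth g_cpt
  have hg₁ : HasCompactSupport (Complex.ofRealCLM ∘ g) := g_cpt.comp_left rfl
  have hg₂ : ContDiff ℝ ∞ (Complex.ofRealCLM ∘ g) := by fun_prop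
  set s : 𝓢(E, ℂ) := hg₁.toSchwartzMap hg₂ with hs
  have hsg : ∀ x, s x = (g x : ℂ) := fun x => by simp [hs]
  have h1 := congrArg (fun T : TemperedDistribution E ℂ => T s)
    (Lp.fourier_toTemperedDistribution_eq (hf2.toLp f))
  simp only [TemperedDistribution.fourier_apply, Lp.toTemperedDistribution_apply, hsg] at h1
  have h2 : ∫ ξ, (𝓕 (s : E → ℂ) ξ) • f ξ = ∫ x, s x • 𝓕 f x := by
    simpa using! VectorFourier.integral_fourierIntegral_smul_eq_flip (L := innerₗ E)
      Real.continuous_fourierChar (by exact continuous_inner) s.integrable hf1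
  simp only [Complex.real_smul]
  simp only [smul_eq_mul] at h1 h2
  rw [← h1]
  simp only [hsg] at h2
  rw [← h2]
  refine integral_congr_ae ?_
  filter_upwards [hf2.coeFn_toLp] with x hx
  rw [hx, SchwartzMap.fourier_coe]

lemma memLp_fourier {f : E → ℂ} (hf1 : Integrable f) (hf2 : MemLp f 2) : MemLp (𝓕 f) 2 :=
  (memLp_congr_ae (fourier_toLp_ae_eq hf1 hf2)).1 (Lp.memLp _)

/-- Plancherel's identity, in polarised form, for the Fourier integral. -/
lemma integral_conj_fourier_mul_fourier {f g : E → ℂ} (hf1 : Integrable f) (hf2 : MemLp f 2)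
    (hg1 : Integrable g) (hg2 : MemLp g 2) :
    ∫ x, 𝓕 g x * starRingEnd ℂ (𝓕 f x) = ∫ x, g x * starRingEnd ℂ (f x) := by
  have h := Lp.inner_fourier_eq (hf2.toLp f) (hg2.toLp g)
  rw [L2.inner_def, L2.inner_def] at h
  simp only [RCLike.inner_apply] at h
  have e1 : ∫ x, 𝓕 g x * starRingEnd ℂ (𝓕 f x) =
      ∫ x, (𝓕 (hg2.toLp g) : Lp (α := E) ℂ 2 volume) x *
        starRingEnd ℂ ((𝓕 (hf2.toLp f) : Lp (α := E) ℂ 2 volume) x) := by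
    refine integral_congr_ae ?_
    filter_upwards [fourier_toLp_ae_eq hf1 hf2, fourier_toLp_ae_eq hg1 hg2] with x hx hy
    rw [hx, hy]
  rw [e1, h]
  refine integral_congr_ae ?_
  filter_upwards [hf2.coeFn_toLp, hg2.coeFn_toLp] with x hx hy
  rw [hx, hy]

end Plancherel

/-! ### The Fourier integral kernel -/

section Kernel

open FourierTransform

/-- The one-dimensional Fourier integral kernel `u ↦ (R / π) · sin (R u) / (R u)`. -/
noncomputable def ker1 (R u : ℝ) : ℝ := R / π * sincLike (R * u)

lemma sincLike_eq_sinc : sincLike = Real.sinc := rfl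

lemma continuous_ker1 (R : ℝ) : Continuous (ker1 R) := by
  unfold ker1
  rw [sincLike_eq_sinc]
  have := Real.continuous_sinc
  fun_prop

lemma abs_ker1_le {R : ℝ} (hR : 0 < R) (u : ℝ) : |ker1 R u| ≤ R / π := by
  have h := Real.abs_sinc_le_one (R * u)
  have hp : 0 < R / π := by positivity
  rw [ker1, sincLike_eq_sinc, abs_mul, abs_of_pos hp]
  exact mul_le_of_le_one_right hp.le h

lemma ker1_zero (R : ℝ) : ker1 R 0 = R / π := by simp [ker1, sincLike]

lemma ker1_neg (R u : ℝ) : ker1 R (-u) = ker1 R u := by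
  simp [ker1, sincLike_eq_sinc, Real.sinc_neg]

lemma integral_exp_eq_ker1 {R : ℝ} (hR : 0 < R) (u : ℝ) :
    ∫ t in Set.Icc (-R) R, Complex.exp (Complex.I * ((t * u : ℝ) : ℂ)) =
      ((2 * π * ker1 R u : ℝ) : ℂ) := by
  rw [integral_Icc_eq_integral_Ioc, ← intervalIntegral.integral_of_le (by linarith)]
  rcases eq_or_ne u 0 with rfl | hu
  · simp only [mul_zero, Complex.ofReal_zero, Complex.exp_zero, ker1_zero]
    rw [intervalIntegral.integral_const]
    have : R - -R = 2 * π * (R / π) := by field_simp; ring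
    rw [this]; simp
  · have h := intervalIntegral.integral_comp_mul_right (a := -R) (b := R)
      (fun t : ℝ => Complex.exp (t * Complex.I)) hu
    have e : ∀ t : ℝ, Complex.exp (Complex.I * ((t * u : ℝ) : ℂ)) =
        Complex.exp (((t * u : ℝ) : ℂ) * Complex.I) := fun t => by rw [mul_comm]
    simp_rw [e]
    rw [h, neg_mul, integral_exp_mul_I_eq_sinc, ker1, sincLike_eq_sinc, Complex.real_smul]
    have hu' : (u : ℂ) ≠ 0 := by exact_mod_cast hu
    have hpi : (π : ℂ) ≠ 0 := by exact_mod_cast Real.pi_ne_zero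
    push_cast
    field_simp

/-- A modulated indicator of `[-R/2π, R/2π]`; its Fourier transform is the kernel centred at
`a`. -/
noncomputable def modInd (R a : ℝ) : ℝ → ℂ :=
  (Set.Icc (-(R / (2 * π))) (R / (2 * π))).indicator
    fun t => Complex.exp (Complex.I * ((2 * π * t * a : ℝ) : ℂ))

lemma memLp_modInd (R a : ℝ) (q : ENNReal) : MemLp (modInd R a) q := by
  unfold modInd
  rw [memLp_indicator_iff_restrict measurableSet_Icc]
  have : IsFiniteMeasure (volume.restrict (Set.Icc (-(R / (2 * π))) (R / (2 * π)))) :=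
    ⟨by simp⟩
  refine MemLp.of_bound (C := 1) (Continuous.aestronglyMeasurable (by fun_prop)) ?_
  filter_upwards with t
  rw [mul_comm, Complex.norm_exp_ofReal_mul_I]

lemma integral_modInd_mul {R : ℝ} (hR : 0 < R) (u : ℝ) :
    ∫ t in Set.Icc (-(R / (2 * π))) (R / (2 * π)),
      Complex.exp (Complex.I * ((2 * π * t * u : ℝ) : ℂ)) = (ker1 R u : ℂ) := by
  have hpi := Real.pi_pos
  rw [integral_Icc_eq_integral_Ioc,
    ← intervalIntegral.integral_of_le (by have : 0 < R / (2 * π) := by positivity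
                                          linarith)]
  have h := intervalIntegral.integral_comp_mul_left (a := -(R / (2 * π))) (b := R / (2 * π))
      (fun t : ℝ => Complex.exp (Complex.I * ((t * u : ℝ) : ℂ))) (c := 2 * π) (by positivity)
  rw [h]
  have e1 : 2 * π * -(R / (2 * π)) = -R := by field_simp
  have e2 : 2 * π * (R / (2 * π)) = R := by field_simp
  rw [e1, e2, intervalIntegral.integral_of_le (by linarith), ← integral_Icc_eq_integral_Ioc,
    integral_exp_eq_ker1 hR, Complex.real_smul, ← Complex.ofReal_mul]
  congr 1
  field_simp

lemma fourier_modInd {R : ℝ} (hR : 0 < R) (a k : ℝ) : 𝓕 (modInd R a) k = (ker1 R (k - a) : ℂ) := by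
  rw [Real.fourier_eq', ← neg_sub, ker1_neg, ← integral_modInd_mul hR,
    ← integral_indicator measurableSet_Icc]
  refine integral_congr_ae (Filter.Eventually.of_forall fun t => ?_)
  by_cases ht : t ∈ Set.Icc (-(R / (2 * π))) (R / (2 * π))
  · simp only [modInd, Set.indicator_of_mem ht, smul_eq_mul]
    rw [← Complex.exp_add]
    congr 1
    simp
    ring
  · simp [modInd, Set.indicator_of_notMem ht]

lemma memLp_ker1 {R : ℝ} (hR : 0 < R) (a : ℝ) : MemLp (fun k => ker1 R (k - a)) 2 := by
  have h := memLp_fourier (memLp_one_iff_integrable.1 (memLp_modInd R a 1)) (memLp_modInd R a 2)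
  have e : 𝓕 (modInd R a) = fun k => (ker1 R (k - a) : ℂ) := funext fun k => fourier_modInd hR a k
  rw [e] at h
  exact h.re

/-- The kernel is an idempotent for convolution, because its Fourier transform is an indicator. -/
lemma integral_ker1_mul_ker1 {R : ℝ} (hR : 0 < R) (a b : ℝ) :
    ∫ k, ker1 R (k - a) * ker1 R (k - b) = ker1 R (a - b) := by
  have h := integral_conj_fourier_mul_fourier
    (memLp_one_iff_integrable.1 (memLp_modInd R b 1)) (memLp_modInd R b 2)
    (memLp_one_iff_integrable.1 (memLp_modInd R a 1)) (memLp_modInd R a 2)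
  simp only [fourier_modInd hR, Complex.conj_ofReal, ← Complex.ofReal_mul] at h
  rw [integral_complex_ofReal] at h
  apply Complex.ofReal_injective
  rw [h, ← integral_modInd_mul hR, ← integral_indicator measurableSet_Icc]
  refine integral_congr_ae (Filter.Eventually.of_forall fun t => ?_)
  by_cases ht : t ∈ Set.Icc (-(R / (2 * π))) (R / (2 * π))
  · simp only [modInd, Set.indicator_of_mem ht]
    rw [← Complex.exp_conj, ← Complex.exp_add]
    congr 1
    simp only [map_mul, Complex.conj_I, Complex.conj_ofReal]
    push_cast
    ring
  · simp [modInd, Set.indicator_of_notMem ht]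

variable {D : ℕ}

/-- The product kernel on `ℝ^D`. -/
noncomputable def kerD (R : ℝ) (u : Fin D → ℝ) : ℝ := ∏ j, ker1 R (u j)

lemma continuous_kerD (R : ℝ) : Continuous (kerD R : (Fin D → ℝ) → ℝ) := by
  have := continuous_ker1 R
  unfold kerD
  fun_prop

lemma abs_kerD_le {R : ℝ} (hR : 0 < R) (u : Fin D → ℝ) : |kerD R u| ≤ (R / π) ^ D := by
  rw [kerD, Finset.abs_prod]
  calc ∏ j, |ker1 R (u j)| ≤ ∏ _j : Fin D, (R / π) :=
        Finset.prod_le_prod (fun _ _ => abs_nonneg _) fun _ _ => abs_ker1_le hR _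
    _ = _ := by simp [div_pow]

lemma kerD_zero (R : ℝ) : kerD R (0 : Fin D → ℝ) = (R / π) ^ D := by
  simp [kerD, ker1_zero, div_pow]

lemma kerD_neg (R : ℝ) (u : Fin D → ℝ) : kerD R (-u) = kerD R u := by
  simp [kerD, ker1_neg]

lemma integrable_kerD_mul {R : ℝ} (hR : 0 < R) (a b : Fin D → ℝ) :
    Integrable fun k => kerD R (k - a) * kerD R (k - b) := by
  simp only [kerD, ← Finset.prod_mul_distrib]
  exact Integrable.fintype_prod
    (f := fun j (k : ℝ) => ker1 R (k - a j) * ker1 R (k - b j))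
    fun j => (memLp_ker1 hR (a j)).integrable_mul (memLp_ker1 hR (b j))

lemma integral_kerD_mul {R : ℝ} (hR : 0 < R) (a b : Fin D → ℝ) :
    ∫ k, kerD R (k - a) * kerD R (k - b) = kerD R (a - b) := by
  simp only [kerD, ← Finset.prod_mul_distrib]
  exact (integral_fintype_prod_volume_eq_prod
    (fun j (k : ℝ) => ker1 R (k - a j) * ker1 R (k - b j))).trans
    (Finset.prod_congr rfl fun j _ => integral_ker1_mul_ker1 hR _ _)

/-- The frequency cube `[-R, R]^D`. -/
def cube (D : ℕ) (R : ℝ) : Set (Fin D → ℝ) := Set.univ.pi fun _ => Set.Icc (-R) R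

lemma measurableSet_cube (R : ℝ) : MeasurableSet (cube D R) :=
  MeasurableSet.univ_pi fun _ => measurableSet_Icc

lemma volume_restrict_cube (R : ℝ) : (volume : Measure (Fin D → ℝ)).restrict (cube D R) =
    Measure.pi fun _ => (volume : Measure ℝ).restrict (Set.Icc (-R) R) := by
  rw [cube, volume_pi, Measure.restrict_pi_pi]

/-- The kernel is the inverse Fourier transform of the indicator of the cube. -/
lemma integral_cube_exp {R : ℝ} (hR : 0 < R) (u : Fin D → ℝ) :
    ∫ t in cube D R, Complex.exp (Complex.I * ((∑ j, t j * u j : ℝ) : ℂ)) =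
      (((2 * π) ^ D * kerD R u : ℝ) : ℂ) := by
  have e : ∀ t : Fin D → ℝ, Complex.exp (Complex.I * ((∑ j, t j * u j : ℝ) : ℂ)) =
      ∏ j, Complex.exp (Complex.I * ((t j * u j : ℝ) : ℂ)) := fun t => by
    rw [← Complex.exp_sum, Complex.ofReal_sum, Finset.mul_sum]
  simp_rw [e]
  rw [volume_restrict_cube, integral_fintype_prod_eq_prod
    (fun j (s : ℝ) => Complex.exp (Complex.I * ((s * u j : ℝ) : ℂ)))]
  simp_rw [integral_exp_eq_ker1 hR]
  rw [← Complex.ofReal_prod, Finset.prod_mul_distrib]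
  simp [kerD]

end Kernel

/-! ### The Fourier transform of the density -/

section CharFun

open FourierTransform

variable {D : ℕ} {p : (Fin D → ℝ) → ℝ}

/-- The density viewed as a complex function on Euclidean space. -/
noncomputable def euclDensity (p : (Fin D → ℝ) → ℝ) : EuclideanSpace ℝ (Fin D) → ℂ :=
  fun x => (p (WithLp.ofLp x) : ℂ)

lemma integrable_euclDensity (hp : Integrable p) : Integrable (euclDensity p) :=
  ((PiLp.volume_preserving_ofLp (Fin D)).integrable_comp_of_integrable hp).ofReal

lemma memLp_euclDensity (hp_meas : Measurable p) (hp_sq : Integrable fun x => p x ^ 2) :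
    MemLp (euclDensity p) 2 :=
  (((memLp_two_iff_integrable_sq hp_meas.aestronglyMeasurable).2 hp_sq).comp_measurePreserving
    (PiLp.volume_preserving_ofLp (Fin D))).ofReal

/-- Mathlib's Fourier transform carries the phase `-2πi⟨x, w⟩`, whence the factor `-2π`. -/
lemma fourier_euclDensity (w : EuclideanSpace ℝ (Fin D)) :
    𝓕 (euclDensity p) w = _root_.charFun D p ((-(2 * π)) • WithLp.ofLp w) := by
  rw [Real.fourier_eq', _root_.charFun,
    ← (PiLp.volume_preserving_ofLp (Fin D)).integral_comp
      (MeasurableEquiv.toLp 2 (Fin D → ℝ)).symm.measurableEmbedding]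
  refine integral_congr_ae (Filter.Eventually.of_forall fun x => ?_)
  simp only [euclDensity, smul_eq_mul]
  congr 2
  rw [mul_comm Complex.I, PiLp.inner_apply]
  congr 2
  simp only [Pi.smul_apply, smul_eq_mul, RCLike.inner_apply, conj_trivial]
  rw [Finset.mul_sum]
  exact Finset.sum_congr rfl fun j _ => by ring

lemma continuous_charFun (hp : Integrable p) : Continuous (_root_.charFun D p) := by
  have hcont : Continuous (𝓕 (euclDensity p)) :=
    VectorFourier.fourierIntegral_continuous Real.continuous_fourierChar
      (by exact continuous_inner) (integrable_euclDensity hp)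
  have e : _root_.charFun D p = fun t =>
      𝓕 (euclDensity p) (WithLp.toLp 2 ((-(2 * π))⁻¹ • t)) := by
    funext t
    rw [fourier_euclDensity, WithLp.ofLp_toLp, smul_inv_smul₀]
    have := Real.pi_pos
    exact neg_ne_zero.2 (by positivity)
  rw [e]
  exact hcont.comp (by fun_prop)

/-- Plancherel's identity for the density, in the normalisation of `charFun`. -/
lemma integral_sq_eq (hp_meas : Measurable p) (hp : Integrable p)
    (hp_sq : Integrable fun x => p x ^ 2) :
    ∫ x, p x ^ 2 = ((2 * π) ^ D)⁻¹ * ∫ t, ‖_root_.charFun D p t‖ ^ 2 := by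
  have h := integral_conj_fourier_mul_fourier (integrable_euclDensity hp)
    (memLp_euclDensity hp_meas hp_sq) (integrable_euclDensity hp)
    (memLp_euclDensity hp_meas hp_sq)
  simp only [Complex.mul_conj, Complex.normSq_eq_norm_sq] at h
  rw [integral_complex_ofReal, integral_complex_ofReal, Complex.ofReal_inj] at h
  simp only [fourier_euclDensity] at h
  have hemb := (MeasurableEquiv.toLp 2 (Fin D → ℝ)).symm.measurableEmbedding
  have h1 : ∫ w : EuclideanSpace ℝ (Fin D),
      ‖_root_.charFun D p ((-(2 * π)) • WithLp.ofLp w)‖ ^ 2 =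
      ∫ w : Fin D → ℝ, ‖_root_.charFun D p ((-(2 * π)) • w)‖ ^ 2 :=
    (PiLp.volume_preserving_ofLp (Fin D)).integral_comp hemb
      (fun w : Fin D → ℝ => ‖_root_.charFun D p ((-(2 * π)) • w)‖ ^ 2)
  have h2 : ∫ w : EuclideanSpace ℝ (Fin D), ‖euclDensity p w‖ ^ 2 = ∫ x, p x ^ 2 := by
    rw [← (PiLp.volume_preserving_ofLp (Fin D)).integral_comp hemb]
    simp [euclDensity]
  rw [h1, h2, Measure.integral_comp_smul volume
    (fun w : Fin D → ℝ => ‖_root_.charFun D p w‖ ^ 2)] at h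
  rw [← h, smul_eq_mul]
  congr 1
  rw [Module.finrank_fin_fun, abs_inv, abs_pow, abs_neg, abs_of_pos (by positivity)]

lemma integrable_exp_neg_sum {α c : ℝ} (hα : 0 < α) (hc : 0 < c) :
    Integrable fun t : Fin D → ℝ => Real.exp (-c * ∑ j, |t j| ^ α) := by
  have h1 : Integrable fun s : ℝ => Real.exp (-c * |s| ^ α) := by
    have h0 : IntegrableOn (fun s : ℝ => Real.exp (-c * |s| ^ α)) (Set.Ioi 0) := by
      refine (integrableOn_rpow_mul_exp_neg_mul_rpow (s := 0) (by norm_num) hα hc).congr_fun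
        (fun s hs => ?_) measurableSet_Ioi
      simp only [Real.rpow_zero, one_mul, abs_of_pos (Set.mem_Ioi.1 hs)]
    have h0' : IntegrableOn (fun s : ℝ => Real.exp (-c * |s| ^ α)) (Set.Iic 0) := by
      rw [integrableOn_Iic_iff_integrableOn_Iio]
      have := (Measure.measurePreserving_neg (volume : Measure ℝ)).integrableOn_comp_preimage
        (MeasurableEquiv.neg ℝ).measurableEmbedding
        (f := fun s : ℝ => Real.exp (-c * |s| ^ α)) (s := Set.Ioi 0)
      have h2 := this.2 h0
      simpa [Function.comp_def] using h2
    rw [← integrableOn_univ, ← Set.Iic_union_Ioi (a := (0 : ℝ))]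
    exact h0'.union h0
  have h2 := Integrable.fintype_prod (f := fun (_ : Fin D) (s : ℝ) => Real.exp (-c * |s| ^ α))
    (μ := fun _ => volume) fun _ => h1
  refine h2.congr (Filter.Eventually.of_forall fun t => ?_)
  simp only [← Real.exp_sum, Finset.mul_sum]

/-- Outside the cube `[-R, R]^D` half of the exponential decay of `|p̂|²` yields the factor
`exp (-C₂ R ^ α)`, and the other half keeps the integral finite. -/
lemma tail_bound {α C₁ C₂ : ℝ} (hα : 0 < α) (hC₂ : 0 < C₂) (hp : Integrable p)
    (hsuper : ∀ᵐ x : Fin D → ℝ,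
      ‖_root_.charFun D p x‖ ≤ C₁ * Real.exp (-C₂ * ∑ j : Fin D, |x j| ^ α))
    {R : ℝ} (hR : 0 < R) :
    ∫ t, ‖_root_.charFun D p t‖ ^ 2 ≤ (∫ t in cube D R, ‖_root_.charFun D p t‖ ^ 2) +
      C₁ ^ 2 * (∫ t : Fin D → ℝ, Real.exp (-C₂ * ∑ j, |t j| ^ α)) * Real.exp (-C₂ * R ^ α) := by
  have hsq : ∀ᵐ t : Fin D → ℝ, ‖_root_.charFun D p t‖ ^ 2 ≤
      C₁ ^ 2 * (Real.exp (-C₂ * ∑ j, |t j| ^ α) * Real.exp (-C₂ * ∑ j, |t j| ^ α)) := by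
    filter_upwards [hsuper] with t ht
    calc _ ≤ (C₁ * Real.exp (-C₂ * ∑ j : Fin D, |t j| ^ α)) ^ 2 := by gcongr
      _ = _ := by ring
  have hsum0 : ∀ t : Fin D → ℝ, 0 ≤ ∑ j, |t j| ^ α := fun t =>
    Finset.sum_nonneg fun j _ => by positivity
  have hint := (integrable_exp_neg_sum (D := D) hα hC₂)
  have hI : Integrable fun t => ‖_root_.charFun D p t‖ ^ 2 := by
    refine (hint.const_mul (C₁ ^ 2)).mono'
      ((continuous_charFun hp).norm.pow 2).aestronglyMeasurable ?_
    filter_upwards [hsq] with t ht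
    rw [Real.norm_of_nonneg (by positivity)]
    refine ht.trans ?_
    gcongr
    refine mul_le_of_le_one_left (Real.exp_pos _).le (Real.exp_le_one_iff.2 ?_)
    nlinarith [hsum0 t]
  rw [← integral_add_compl (measurableSet_cube R) hI]
  gcongr
  calc ∫ t in (cube D R)ᶜ, ‖_root_.charFun D p t‖ ^ 2
      ≤ ∫ t in (cube D R)ᶜ,
          C₁ ^ 2 * (Real.exp (-C₂ * ∑ j, |t j| ^ α) * Real.exp (-C₂ * R ^ α)) := by
        refine setIntegral_mono_on_ae hI.integrableOn
          (((hint.mul_const _).const_mul _).integrableOn) (measurableSet_cube R).compl ?_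
        filter_upwards [hsq] with t ht hmem
        refine ht.trans ?_
        obtain ⟨j, hj⟩ : ∃ j, R < |t j| := by
          by_contra! hcon
          exact hmem fun j _ => abs_le.1 (hcon j)
        have h1 : R ^ α ≤ ∑ j, |t j| ^ α :=
          (Real.rpow_le_rpow hR.le hj.le hα.le).trans
            (Finset.single_le_sum (f := fun j => |t j| ^ α) (fun j _ => by positivity)
              (Finset.mem_univ j))
        gcongr C₁ ^ 2 * (_ * Real.exp ?_)
        nlinarith
    _ ≤ ∫ t : Fin D → ℝ,
          C₁ ^ 2 * (Real.exp (-C₂ * ∑ j, |t j| ^ α) * Real.exp (-C₂ * R ^ α)) :=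
        setIntegral_le_integral ((hint.mul_const _).const_mul _)
          (Filter.Eventually.of_forall fun t => by positivity)
    _ = _ := by
        rw [integral_const_mul, integral_mul_const, mul_assoc]

/-- Fubini turns the quadratic form of the kernel into the energy of `p̂` on the cube. -/
lemma integral_kerD_density (hp : Integrable p) {R : ℝ} (hR : 0 < R) :
    ∫ x, ∫ y, kerD R (x - y) * (p x * p y) =
      ((2 * π) ^ D)⁻¹ * ∫ t in cube D R, ‖_root_.charFun D p t‖ ^ 2 := by
  set ν : Measure (Fin D → ℝ) := volume.restrict (cube D R) with hν
  have hfin : IsFiniteMeasure ν := ⟨by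
    simp only [hν, Measure.restrict_apply_univ, cube]
    rw [volume_pi_pi]
    exact ENNReal.prod_lt_top fun _ _ => by simp⟩
  have hpc : Integrable fun x => (p x : ℂ) := hp.ofReal
  -- the integrand, on frequencies times pairs of points
  let F : (Fin D → ℝ) → (Fin D → ℝ) × (Fin D → ℝ) → ℂ := fun t z =>
    Complex.exp (Complex.I * ((∑ j, t j * (z.1 - z.2) j : ℝ) : ℂ)) * ((p z.1 : ℂ) * (p z.2 : ℂ))
  have hF : Integrable (Function.uncurry F) (ν.prod (volume.prod volume)) := by
    have h1 : Integrable (fun w : (Fin D → ℝ) × ((Fin D → ℝ) × (Fin D → ℝ)) =>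
        (1 : ℂ) * ((p w.2.1 : ℂ) * (p w.2.2 : ℂ))) (ν.prod (volume.prod volume)) :=
      (integrable_const (1 : ℂ)).mul_prod (hpc.mul_prod hpc)
    simp only [one_mul] at h1
    refine h1.bdd_mul (c := 1) (Continuous.aestronglyMeasurable (by fun_prop)) ?_
    filter_upwards with w
    rw [mul_comm, Complex.norm_exp_ofReal_mul_I]
  have hswap := integral_integral_swap hF
  have hL : ∀ t, ∫ z, F t z ∂(volume.prod volume) = ((‖_root_.charFun D p t‖ ^ 2 : ℝ) : ℂ) := by
    intro t
    have : ∀ z, F t z = (Complex.exp (Complex.I * ((∑ j, t j * z.1 j : ℝ) : ℂ)) * (p z.1 : ℂ)) *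
        (starRingEnd ℂ (Complex.exp (Complex.I * ((∑ j, t j * z.2 j : ℝ) : ℂ)) * (p z.2 : ℂ))) := by
      intro z
      simp only [F, map_mul, Complex.conj_ofReal]
      rw [← Complex.exp_conj]
      simp only [map_mul, Complex.conj_I, Complex.conj_ofReal]
      rw [mul_mul_mul_comm, ← Complex.exp_add]
      congr 2
      simp only [Pi.sub_apply, mul_sub, Finset.sum_sub_distrib]
      push_cast
      ring
    simp_rw [this]
    rw [integral_prod_mul (fun x : Fin D → ℝ =>
        Complex.exp (Complex.I * ((∑ j, t j * x j : ℝ) : ℂ)) * (p x : ℂ))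
      (fun x : Fin D → ℝ => starRingEnd ℂ
        (Complex.exp (Complex.I * ((∑ j, t j * x j : ℝ) : ℂ)) * (p x : ℂ))), integral_conj]
    change _root_.charFun D p t * starRingEnd ℂ (_root_.charFun D p t) = _
    rw [Complex.mul_conj, Complex.normSq_eq_norm_sq]
  have hRt : ∀ z, ∫ t, F t z ∂ν =
      (((2 * π) ^ D * (kerD R (z.1 - z.2) * (p z.1 * p z.2)) : ℝ) : ℂ) := by
    intro z
    simp only [F]
    rw [integral_mul_const, hν, integral_cube_exp hR]
    push_cast
    ring
  simp_rw [hL, hRt] at hswap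
  rw [integral_complex_ofReal, integral_complex_ofReal, Complex.ofReal_inj,
    integral_const_mul] at hswap
  rw [hswap, ← mul_assoc, inv_mul_cancel₀ (by positivity), one_mul, integral_prod]
  refine (hp.mul_prod hp).bdd_mul (c := (R / π) ^ D)
    (Continuous.aestronglyMeasurable ((continuous_kerD R).comp (by fun_prop))) ?_
  exact Filter.Eventually.of_forall fun z => abs_kerD_le hR _

end CharFun

/-! ### The exact risk -/

section Risk

open ProbabilityTheory

variable {D N : ℕ} {p : (Fin D → ℝ) → ℝ}

lemma pEst_eq (R : ℝ) (ks : Fin N → Fin D → ℝ) (k : Fin D → ℝ) :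
    pEst D N (fun z => z) π R ks k = (N : ℝ)⁻¹ * ∑ i, kerD R (k - ks i) := by
  simp only [pEst, kerD, ker1, Pi.sub_apply, Finset.prod_mul_distrib, Finset.prod_const,
    Finset.card_univ, Fintype.card_fin, ← Finset.mul_sum]
  rw [← mul_assoc]
  congr 1
  rw [div_pow, div_mul_eq_div_div_swap, inv_mul_eq_div]

/-- The kernel smoothing of the density `p`. -/
noncomputable def smooth (R : ℝ) (p : (Fin D → ℝ) → ℝ) (a : Fin D → ℝ) : ℝ :=
  ∫ k, kerD R (k - a) * p k

lemma integrable_kerD_mul_density (hp : Integrable p) {R : ℝ} (hR : 0 < R) (a : Fin D → ℝ) :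
    Integrable fun k => kerD R (k - a) * p k :=
  hp.bdd_mul (c := (R / π) ^ D)
    (Continuous.aestronglyMeasurable ((continuous_kerD R).comp (by fun_prop)))
    (Filter.Eventually.of_forall fun _ => abs_kerD_le hR _)

lemma continuous_smooth (hp : Integrable p) {R : ℝ} (hR : 0 < R) : Continuous (smooth R p) := by
  refine continuous_of_dominated (bound := fun k => (R / π) ^ D * ‖p k‖)
    (fun a => (integrable_kerD_mul_density hp hR a).aestronglyMeasurable) (fun a => ?_)
    (hp.norm.const_mul _) ?_
  · filter_upwards with k
    rw [norm_mul]
    gcongr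
    exact abs_kerD_le hR _
  · filter_upwards with k
    exact ((continuous_kerD R).comp (by fun_prop)).mul continuous_const

lemma integral_lincomb {X : Type*} [MeasurableSpace X] {m : Measure X} {f g h : X → ℝ}
    (hf : Integrable f m) (hg : Integrable g m) (hh : Integrable h m) (a b : ℝ) :
    ∫ x, (a * f x - b * g x + h x) ∂m = a * ∫ x, f x ∂m - b * ∫ x, g x ∂m + ∫ x, h x ∂m := by
  have h1 : Integrable (fun x => a * f x - b * g x) m := (hf.const_mul a).sub (hg.const_mul b)
  rw [integral_add h1 hh, integral_sub (hf.const_mul a) (hg.const_mul b), integral_const_mul,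
    integral_const_mul]

/-- Expansion of the square for a fixed sample; idempotence of the kernel evaluates the
quadratic term. -/
lemma integrated_sq_error (hp : Integrable p) (hp_sq : Integrable fun x => p x ^ 2)
    {R : ℝ} (hR : 0 < R) (ks : Fin N → Fin D → ℝ) :
    ∫ k, (pEst D N (fun z => z) π R ks k - p k) ^ 2 =
      ((N : ℝ)⁻¹ ^ 2 * ∑ i, ∑ j, kerD R (ks i - ks j)) -
        2 * (N : ℝ)⁻¹ * ∑ i, smooth R p (ks i) + ∫ x, p x ^ 2 := by
  have e : ∀ k, (pEst D N (fun z => z) π R ks k - p k) ^ 2 =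
      ((N : ℝ)⁻¹ ^ 2 * ∑ i, ∑ j, kerD R (k - ks i) * kerD R (k - ks j)) -
        2 * (N : ℝ)⁻¹ * ∑ i, kerD R (k - ks i) * p k + p k ^ 2 := by
    intro k
    rw [pEst_eq, ← Finset.sum_mul_sum, ← Finset.sum_mul]
    ring
  simp_rw [e]
  have i1 : ∀ i, Integrable fun k => ∑ j, kerD R (k - ks i) * kerD R (k - ks j) := fun i =>
    integrable_finsetSum _ fun j _ => integrable_kerD_mul hR (ks i) (ks j)
  have i1' : Integrable fun k => ∑ i, ∑ j, kerD R (k - ks i) * kerD R (k - ks j) :=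
    integrable_finsetSum _ fun i _ => i1 i
  have i2 : Integrable fun k => ∑ i, kerD R (k - ks i) * p k :=
    integrable_finsetSum _ fun i _ => integrable_kerD_mul_density hp hR (ks i)
  rw [integral_lincomb i1' i2 hp_sq, integral_finsetSum _ fun i _ => i1 i,
    integral_finsetSum _ fun i _ => integrable_kerD_mul_density hp hR (ks i)]
  have hq : ∀ i, ∫ k, ∑ j, kerD R (k - ks i) * kerD R (k - ks j) =
      ∑ j, kerD R (ks i - ks j) := fun i => by
    rw [integral_finsetSum _ fun j _ => integrable_kerD_mul hR (ks i) (ks j)]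
    exact Finset.sum_congr rfl fun j _ => integral_kerD_mul hR _ _
  simp_rw [hq]
  rfl

lemma isProbabilityMeasure_density (hp_nonneg : ∀ x, 0 ≤ p x) (hp : Integrable p)
    (hp_one : ∫ x, p x = 1) :
    IsProbabilityMeasure (volume.withDensity fun x => ENNReal.ofReal (p x)) := by
  refine ⟨?_⟩
  rw [withDensity_apply _ MeasurableSet.univ, Measure.restrict_univ,
    ← ofReal_integral_eq_lintegral_ofReal hp (Filter.Eventually.of_forall hp_nonneg), hp_one,
    ENNReal.ofReal_one]

lemma integral_density (hp_meas : Measurable p) (hp_nonneg : ∀ x, 0 ≤ p x)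
    (g : (Fin D → ℝ) → ℝ) :
    ∫ x, g x ∂(volume.withDensity fun x => ENNReal.ofReal (p x)) = ∫ x, p x * g x := by
  rw [integral_withDensity_eq_integral_toReal_smul hp_meas.ennreal_ofReal
    (Filter.Eventually.of_forall fun _ => ENNReal.ofReal_lt_top)]
  simp [ENNReal.toReal_ofReal (hp_nonneg _)]

/-- The exact risk, with `S = ∬ K(x - y) p(x) p(y)`: the variance is `(K(0) - S) / N` and the
squared bias is `∫ p² - S`. -/
lemma MISE_eq (hp_meas : Measurable p) (hp_nonneg : ∀ x, 0 ≤ p x) (hp : Integrable p)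
    (hp_sq : Integrable fun x => p x ^ 2) (hp_one : ∫ x, p x = 1)
    {R : ℝ} (hR : 0 < R) (hN : 1 ≤ N) :
    MISE D N (fun z => z) π R p =
      (N : ℝ)⁻¹ * ((R / π) ^ D - ∫ x, ∫ y, kerD R (x - y) * (p x * p y)) +
        ((∫ x, p x ^ 2) - ∫ x, ∫ y, kerD R (x - y) * (p x * p y)) := by
  set S := ∫ x, ∫ y, kerD R (x - y) * (p x * p y) with hS
  set μ : Measure (Fin D → ℝ) := volume.withDensity fun x => ENNReal.ofReal (p x) with hμ
  have hprob : IsProbabilityMeasure μ := isProbabilityMeasure_density hp_nonneg hp hp_one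
  simp only [MISE, integrated_sq_error hp hp_sq hR]
  have hsm : sampleMeasure D N p = Measure.pi fun _ : Fin N => μ := rfl
  rw [hsm]
  set P : Measure (Fin N → Fin D → ℝ) := Measure.pi fun _ : Fin N => μ with hP
  have hsmooth_le : ∀ a, ‖smooth R p a‖ ≤ (R / π) ^ D := by
    intro a
    calc ‖smooth R p a‖ ≤ ∫ k, (R / π) ^ D * p k := by
          refine norm_integral_le_of_norm_le (hp.const_mul _)
            (Filter.Eventually.of_forall fun k => ?_)
          rw [norm_mul, Real.norm_of_nonneg (hp_nonneg k)]
          exact mul_le_mul_of_nonneg_right (abs_kerD_le hR _) (hp_nonneg k)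
      _ = (R / π) ^ D := by rw [integral_const_mul, hp_one, mul_one]
  have j1 : ∀ i j, Integrable (fun ks : Fin N → Fin D → ℝ => kerD R (ks i - ks j)) P := fun i j =>
    Integrable.of_bound (C := (R / π) ^ D)
      (Continuous.aestronglyMeasurable ((continuous_kerD R).comp (by fun_prop)))
      (Filter.Eventually.of_forall fun _ => abs_kerD_le hR _)
  have j2 : ∀ i, Integrable (fun ks : Fin N → Fin D → ℝ => smooth R p (ks i)) P := fun i =>
    Integrable.of_bound (C := (R / π) ^ D)
      (Continuous.aestronglyMeasurable ((continuous_smooth hp hR).comp (by fun_prop)))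
      (Filter.Eventually.of_forall fun _ => hsmooth_le _)
  have E2 : ∀ i, ∫ ks, smooth R p (ks i) ∂P = S := by
    intro i
    rw [hP, integral_comp_eval (μ := fun _ : Fin N => μ) (i := i) (f := smooth R p)
      (continuous_smooth hp hR).aestronglyMeasurable, hμ, integral_density hp_meas hp_nonneg, hS]
    refine integral_congr_ae (Filter.Eventually.of_forall fun x => ?_)
    simp only [smooth]
    rw [← integral_const_mul]
    refine integral_congr_ae (Filter.Eventually.of_forall fun y => ?_)
    simp only
    rw [← kerD_neg, neg_sub]
    ring
  have E1 : ∀ i j, i ≠ j → ∫ ks, kerD R (ks i - ks j) ∂P = S := by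
    intro i j hij
    have hind : IndepFun (fun ks : Fin N → Fin D → ℝ => ks i) (fun ks => ks j) P :=
      (iIndepFun_pi (μ := fun _ : Fin N => μ) (X := fun _ x => x)
        fun _ => aemeasurable_id).indepFun hij
    have hmap := (indepFun_iff_map_prod_eq_prod_map_map
      (measurable_pi_apply i).aemeasurable (measurable_pi_apply j).aemeasurable).1 hind
    have hm : ∀ i, P.map (fun ks : Fin N → Fin D → ℝ => ks i) = μ := fun i =>
      (measurePreserving_eval (fun _ : Fin N => μ) i).map_eq
    rw [hm, hm] at hmap
    have hc : Continuous fun z : (Fin D → ℝ) × (Fin D → ℝ) => kerD R (z.1 - z.2) :=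
      (continuous_kerD R).comp (by fun_prop)
    have h1 : ∫ ks, kerD R (ks i - ks j) ∂P = ∫ z, kerD R (z.1 - z.2) ∂(μ.prod μ) := by
      rw [← hmap, integral_map (by fun_prop) hc.aestronglyMeasurable]
    rw [h1, integral_prod _ (Integrable.of_bound (C := (R / π) ^ D) hc.aestronglyMeasurable
      (Filter.Eventually.of_forall fun _ => abs_kerD_le hR _)), hμ,
      integral_density hp_meas hp_nonneg, hS]
    refine integral_congr_ae (Filter.Eventually.of_forall fun x => ?_)
    simp only
    rw [integral_density hp_meas hp_nonneg, ← integral_const_mul]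
    refine integral_congr_ae (Filter.Eventually.of_forall fun y => ?_)
    simp only
    ring
  have j1s : ∀ i, Integrable (fun ks : Fin N → Fin D → ℝ => ∑ j, kerD R (ks i - ks j)) P :=
    fun i => integrable_finsetSum _ fun j _ => j1 i j
  have j1' : Integrable (fun ks : Fin N → Fin D → ℝ => ∑ i, ∑ j, kerD R (ks i - ks j)) P :=
    integrable_finsetSum _ fun i _ => j1s i
  have j2' : Integrable (fun ks : Fin N → Fin D → ℝ => ∑ i, smooth R p (ks i)) P :=
    integrable_finsetSum _ fun i _ => j2 i
  rw [integral_lincomb j1' j2' (integrable_const _), integral_finsetSum _ fun i _ => j1s i, integral_finsetSum _ fun i _ => j2 i]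
  have E1' : ∀ i, ∫ ks, ∑ j, kerD R (ks i - ks j) ∂P = (R / π) ^ D + ((N : ℝ) - 1) * S := by
    intro i
    rw [integral_finsetSum _ fun j _ => j1 i j, ← Finset.add_sum_erase _ _ (Finset.mem_univ i)]
    have hd : ∫ ks : Fin N → Fin D → ℝ, kerD R (ks i - ks i) ∂P = (R / π) ^ D := by
      simp [kerD_zero]
    rw [hd, Finset.sum_congr rfl fun j hj => E1 i j (Finset.ne_of_mem_erase hj).symm,
      Finset.sum_const, Finset.card_erase_of_mem (Finset.mem_univ i), Finset.card_univ,
      Fintype.card_fin, nsmul_eq_mul, Nat.cast_sub hN, Nat.cast_one]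
  simp_rw [E1', E2]
  simp only [Finset.sum_const, Finset.card_univ, Fintype.card_fin, nsmul_eq_mul, integral_const,
    probReal_univ, smul_eq_mul, one_mul]
  have hN0 : (N : ℝ) ≠ 0 := by
    have : 0 < N := hN
    positivity
  field_simp
  ring

end Risk

/-- MISE bound for the classical Fourier integral estimator (`φ(z) = z`,
`A = π`) when the density is supersmooth of order `α`. -/
theorem mise_bound_fourier_supersmooth
    (D : ℕ) (hD : 0 < D)
    (p : (Fin D → ℝ) → ℝ)
    (hp_meas : Measurable p) (hp_nonneg : ∀ x, 0 ≤ p x)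
    (hp_int : Integrable p) (hp_sq : Integrable (fun x => p x ^ 2))
    (hp_one : ∫ x : Fin D → ℝ, p x = 1)
    (α C₁ C₂ : ℝ) (hα : 0 < α) (hC₁ : 0 < C₁) (hC₂ : 0 < C₂)
    (hsuper : ∀ᵐ x : Fin D → ℝ,
      ‖charFun D p x‖ ≤ C₁ * Real.exp (-C₂ * ∑ j : Fin D, |x j| ^ α)) :
    ∃ B₁ B₂ B₃ : ℝ, 0 < B₁ ∧ 0 < B₂ ∧ 0 < B₃ ∧
      ∀ R : ℝ, B₁ ≤ R → ∀ N : ℕ, 1 ≤ N →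
        MISE D N (fun z => z) Real.pi R p
          ≤ B₂ * (R ^ max (1 - α) 0 * Real.exp (-B₃ * R ^ α) + R ^ D / N) := by
  set I := ∫ t : Fin D → ℝ, Real.exp (-C₂ * ∑ j, |t j| ^ α) with hI
  have hI0 : 0 ≤ I := integral_nonneg fun t => (Real.exp_pos _).le
  set c := ((2 * π) ^ D)⁻¹ with hc
  have hc0 : 0 < c := by positivity
  have hcI : 0 ≤ c * (C₁ ^ 2 * I) := by positivity
  refine ⟨1, c * (C₁ ^ 2 * I) + 1, C₂, one_pos, by positivity, hC₂, fun R hR N hN => ?_⟩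
  have hR0 : 0 < R := by linarith
  have hN0 : (0 : ℝ) < N := by exact_mod_cast hN
  rw [MISE_eq hp_meas hp_nonneg hp_int hp_sq hp_one hR0 hN, integral_kerD_density hp_int hR0,
    integral_sq_eq hp_meas hp_int hp_sq]
  have htail := tail_bound hα hC₂ hp_int hsuper hR0
  set Q := ∫ t in cube D R, ‖_root_.charFun D p t‖ ^ 2 with hQ
  have hQ0 : 0 ≤ Q := integral_nonneg fun t => by positivity
  have hvar : (N : ℝ)⁻¹ * ((R / π) ^ D - c * Q) ≤ R ^ D / N := by
    rw [div_eq_inv_mul (R ^ D)]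
    gcongr
    have h1 : R / π ≤ R := div_le_self hR0.le (by linarith [Real.pi_gt_three])
    have h2 : (R / π) ^ D ≤ R ^ D := by gcongr
    have h3 : 0 ≤ c * Q := by positivity
    linarith
  have hbias : c * (∫ t, ‖_root_.charFun D p t‖ ^ 2) - c * Q ≤
      c * (C₁ ^ 2 * I) * Real.exp (-C₂ * R ^ α) := by
    have := mul_le_mul_of_nonneg_left htail hc0.le
    linarith
  have hpow : Real.exp (-C₂ * R ^ α) ≤ R ^ max (1 - α) 0 * Real.exp (-C₂ * R ^ α) :=
    le_mul_of_one_le_left (Real.exp_pos _).le (Real.one_le_rpow hR (le_max_right _ _))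
  have hRN : 0 ≤ R ^ D / N := by positivity
  have hE : 0 ≤ R ^ max (1 - α) 0 * Real.exp (-C₂ * R ^ α) := by positivity
  nlinarith [mul_le_mul_of_nonneg_left hpow hcI, mul_nonneg hcI hRN]
end
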